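/- Let n ≥ 1, s ∈ (0,1), and let u, v : ℝⁿ → ℝ be Schwartz functions. Define (−Δ)^s u(x) := (c_{n,s}/2) ∫_{ℝⁿ} (2u(x) − u(x+y) − u(x−y))/|y|^{n+2s} dy (an absolutely convergent integral), and similarly for v. Then ∫_{ℝⁿ} ((−Δ)^s u)(x) · v(x) dx = ∫_{ℝⁿ} u(x) · ((−Δ)^s v)(x) dx, both integrals being absolutely convergent; i.e., the fractional Laplacian is symmetric (integration by parts formula). -/

import Mathlib

open MeasureTheory Filter Metric Set
open scoped Topology

/-- The normalization constant `c_{n,s} = (∫_{ℝⁿ} (1 − cos ζ₁)/|ζ|^{n+2s} dζ)⁻¹`. -/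
noncomputable def fracC (n : ℕ) (hn : 1 ≤ n) (s : ℝ) : ℝ :=
  (∫ ζ : EuclideanSpace ℝ (Fin n),
    (1 - Real.cos (ζ ⟨0, hn⟩)) / ‖ζ‖ ^ ((n : ℝ) + 2 * s))⁻¹

/-- The fractional Laplacian in its second-difference form. -/
noncomputable def fracLap (n : ℕ) (hn : 1 ≤ n) (s : ℝ)
    (u : EuclideanSpace ℝ (Fin n) → ℝ) (x : EuclideanSpace ℝ (Fin n)) : ℝ :=
  fracC n hn s / 2 *
    ∫ y : EuclideanSpace ℝ (Fin n),
      (2 * u x - u (x + y) - u (x - y)) / ‖y‖ ^ ((n : ℝ) + 2 * s)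

/-!
The linear terms of the Taylor expansions of `u` at `x ± y` cancel, so for bounded `u` with
Lipschitz gradient the second difference is `O(min(1, |y|²))` uniformly in `x`, and
`min(1, |y|²) / |y|^{n+2s}` is integrable exactly because `0 < 2s < 2`. Pairing with an integrable
`v` therefore gives an absolutely convergent double integral, and Fubini reduces the symmetry to
`∫ v(x) (2u(x) − u(x+y) − u(x−y)) dx = ∫ u(x) (2v(x) − v(x+y) − v(x−y)) dx` for each fixed `y`,
where translating by `±y` swaps the two shifted terms.
-/

section SecondDifference

/-- The symmetric second difference `2u(x) − u(x + y) − u(x − y)`, the numerator of the integrand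
in the fractional Laplacian. -/
def secondDifference {G : Type*} [AddGroup G] (u : G → ℝ) (x y : G) : ℝ :=
  2 * u x - u (x + y) - u (x - y)

variable {E F : Type*} [NormedAddCommGroup E] [NormedSpace ℝ E]
  [NormedAddCommGroup F] [NormedSpace ℝ F]

theorem norm_add_sub_sub_fderiv_le {f : E → F} {L : NNReal} (hf : Differentiable ℝ f)
    (hf' : LipschitzWith L (fderiv ℝ f)) (x y : E) :
    ‖f (x + y) - f x - fderiv ℝ f x y‖ ≤ L * ‖y‖ ^ 2 := by
  have fderiv_close : ∀ z ∈ closedBall x ‖y‖, ‖fderiv ℝ f z - fderiv ℝ f x‖ ≤ L * ‖y‖ :=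
    fun z hz => (hf'.norm_sub_le z x).trans <| by gcongr; exact mem_closedBall_iff_norm.1 hz
  have taylor := (convex_closedBall x ‖y‖).norm_image_sub_le_of_norm_fderiv_le'
    (fun z _ => hf z) fderiv_close (mem_closedBall_self (norm_nonneg y))
    (show x + y ∈ closedBall x ‖y‖ by simp)
  rwa [add_sub_cancel_left, mul_assoc, ← sq] at taylor

theorem abs_secondDifference_le_mul_sq {u : E → ℝ} {L : NNReal} (hu : Differentiable ℝ u)
    (hu' : LipschitzWith L (fderiv ℝ u)) (x y : E) :
    |secondDifference u x y| ≤ 2 * L * ‖y‖ ^ 2 := by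
  have forward := norm_add_sub_sub_fderiv_le hu hu' x y
  have backward := norm_add_sub_sub_fderiv_le hu hu' x (-y)
  rw [norm_neg, map_neg, ← sub_eq_add_neg] at backward
  calc |secondDifference u x y|
      = ‖-((u (x + y) - u x - fderiv ℝ u x y) + (u (x - y) - u x - -fderiv ℝ u x y))‖ := by
        rw [Real.norm_eq_abs, secondDifference]; ring_nf
    _ ≤ L * ‖y‖ ^ 2 + L * ‖y‖ ^ 2 := by
        rw [norm_neg]; exact norm_add_le_of_le forward backward
    _ = 2 * L * ‖y‖ ^ 2 := by ring

theorem abs_secondDifference_le_of_norm_le {G : Type*} [AddGroup G] {u : G → ℝ} {A : ℝ}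
    (hu : ∀ x, ‖u x‖ ≤ A) (x y : G) : |secondDifference u x y| ≤ 4 * A := by
  have hx := abs_le.1 (hu x)
  have hadd := abs_le.1 (hu (x + y))
  have hsub := abs_le.1 (hu (x - y))
  rw [secondDifference, abs_le]
  constructor <;> linarith

theorem exists_abs_secondDifference_le {u : E → ℝ} {A : ℝ} {L : NNReal}
    (hu_bdd : ∀ x, ‖u x‖ ≤ A) (hu : Differentiable ℝ u) (hu' : LipschitzWith L (fderiv ℝ u)) :
    ∃ C : ℝ, ∀ x y, |secondDifference u x y| ≤ C * min 1 (‖y‖ ^ 2) := by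
  refine ⟨max (4 * A) (2 * L), fun x y => ?_⟩
  rcases le_total 1 (‖y‖ ^ 2) with far | near
  · rw [min_eq_left far, mul_one]
    exact (abs_secondDifference_le_of_norm_le hu_bdd x y).trans (le_max_left _ _)
  · rw [min_eq_right near]
    exact (abs_secondDifference_le_mul_sq hu hu' x y).trans (by gcongr; exact le_max_right _ _)

theorem continuous_secondDifference {G : Type*} [AddGroup G] [TopologicalSpace G]
    [IsTopologicalAddGroup G] {u : G → ℝ} (hu : Continuous u) :
    Continuous fun z : G × G => secondDifference u z.1 z.2 := by
  unfold secondDifference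
  fun_prop

theorem norm_secondDifference_mul_le {G : Type*} [NormedAddCommGroup G] {K u : G → ℝ} {C : ℝ}
    (hu : ∀ x y, |secondDifference u x y| ≤ C * min 1 (‖y‖ ^ 2)) (x y : G) :
    ‖secondDifference u x y * K y‖ ≤ C * ‖min 1 (‖y‖ ^ 2) * K y‖ := by
  rw [norm_mul, norm_mul, Real.norm_of_nonneg (by positivity : 0 ≤ min 1 (‖y‖ ^ 2)), ← mul_assoc]
  exact mul_le_mul_of_nonneg_right (hu x y) (norm_nonneg _)

end SecondDifference

section Translation

variable {G : Type*} [AddGroup G] [MeasurableSpace G] {μ : Measure G} {u v : G → ℝ}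

theorem integral_mul_secondDifference (h : ∀ y, Integrable (fun x => v x * u (x + y)) μ) (y : G) :
    ∫ x, v x * secondDifference u x y ∂μ
      = 2 * ∫ x, v x * u x ∂μ - ∫ x, v x * u (x + y) ∂μ - ∫ x, v x * u (x - y) ∂μ := by
  have h_zero : Integrable (fun x => 2 * (v x * u x)) μ := by
    simpa only [add_zero] using (h 0).const_mul 2
  have h_neg : Integrable (fun x => v x * u (x - y)) μ := by
    simpa only [sub_eq_add_neg] using h (-y)
  have h_diff : Integrable (fun x => 2 * (v x * u x) - v x * u (x + y)) μ := h_zero.sub (h y)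
  rw [← integral_const_mul, ← integral_sub h_zero (h y), ← integral_sub h_diff h_neg]
  congr with x
  rw [secondDifference]
  ring

variable [MeasurableAdd G] [μ.IsAddRightInvariant]

theorem integral_mul_comp_add_right_eq (u v : G → ℝ) (y : G) :
    ∫ x, v x * u (x + y) ∂μ = ∫ x, u x * v (x - y) ∂μ := by
  rw [← integral_add_right_eq_self (fun x => u x * v (x - y)) y]
  simp only [add_sub_cancel_right, mul_comm]

theorem integral_mul_secondDifference_comm (h : ∀ y, Integrable (fun x => v x * u (x + y)) μ)
    (y : G) :
    ∫ x, v x * secondDifference u x y ∂μ = ∫ x, u x * secondDifference v x y ∂μ := by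
  have h_swap : ∀ y, Integrable (fun x => u x * v (x + y)) μ := fun y => by
    simpa only [add_neg_cancel_right, mul_comm] using (h (-y)).comp_add_right y
  rw [integral_mul_secondDifference h, integral_mul_secondDifference h_swap,
    integral_mul_comp_add_right_eq u v, integral_mul_comp_add_right_eq v u]
  simp only [mul_comm (v _)]
  ring

end Translation

section LevyOperator

variable {E : Type*} [NormedAddCommGroup E] [MeasurableSpace E] {μ : Measure E} {K u v : E → ℝ}
  {A C D : ℝ}

/-- `K` is the density of a (signed) Lévy measure `K dμ`: it integrates `min(1, |y|²)`, the size
of the second difference of a bounded function with Lipschitz gradient. -/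
structure IsLevyKernel (μ : Measure E) (K : E → ℝ) : Prop where
  aestronglyMeasurable : AEStronglyMeasurable K μ
  integrable_min_mul : Integrable (fun y => min 1 (‖y‖ ^ 2) * K y) μ

/-- The nonlocal operator `u ↦ ∫ (2u(x) − u(x + y) − u(x − y)) K(y) dμ(y)` with jump kernel `K`,
of which the fractional Laplacian is the multiple with `K(y) = |y|^{-(n+2s)}`. -/
noncomputable def levyOperator (μ : Measure E) (K u : E → ℝ) (x : E) : ℝ :=
  ∫ y, secondDifference u x y * K y ∂μ

variable [BorelSpace E]

namespace IsLevyKernel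

theorem integrable_secondDifference_mul (hK : IsLevyKernel μ K) (hu_cont : Continuous u)
    (hu : ∀ x y, |secondDifference u x y| ≤ C * min 1 (‖y‖ ^ 2)) (x : E) :
    Integrable (fun y => secondDifference u x y * K y) μ :=
  (hK.integrable_min_mul.norm.const_mul C).mono'
    (((continuous_secondDifference hu_cont).comp (.prodMk_right x)).aestronglyMeasurable.mul
      hK.aestronglyMeasurable)
    (.of_forall (norm_secondDifference_mul_le hu x))

variable [SecondCountableTopology E]

theorem integrable_prod_mul_secondDifference_mul (hK : IsLevyKernel μ K) (hu_cont : Continuous u)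
    (hu : ∀ x y, |secondDifference u x y| ≤ C * min 1 (‖y‖ ^ 2)) (hv : Integrable v μ) :
    Integrable (fun z : E × E => v z.1 * (secondDifference u z.1 z.2 * K z.2)) (μ.prod μ) := by
  refine (hv.norm.mul_prod (hK.integrable_min_mul.norm.const_mul C)).mono'
    (hv.aestronglyMeasurable.comp_fst.mul
      ((continuous_secondDifference hu_cont).aestronglyMeasurable.mul
        hK.aestronglyMeasurable.comp_snd))
    (.of_forall fun z => ?_)
  rw [norm_mul]
  exact mul_le_mul_of_nonneg_left (norm_secondDifference_mul_le hu z.1 z.2) (norm_nonneg _)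

variable [SFinite μ]

theorem integrable_mul_levyOperator (hK : IsLevyKernel μ K) (hu_cont : Continuous u)
    (hu : ∀ x y, |secondDifference u x y| ≤ C * min 1 (‖y‖ ^ 2)) (hv : Integrable v μ) :
    Integrable (fun x => v x * levyOperator μ K u x) μ := by
  simpa only [integral_const_mul, levyOperator] using
    (hK.integrable_prod_mul_secondDifference_mul hu_cont hu hv).integral_prod_left

theorem integral_mul_levyOperator (hK : IsLevyKernel μ K) (hu_cont : Continuous u)
    (hu : ∀ x y, |secondDifference u x y| ≤ C * min 1 (‖y‖ ^ 2)) (hv : Integrable v μ) :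
    ∫ x, v x * levyOperator μ K u x ∂μ
      = ∫ y, (∫ x, v x * secondDifference u x y ∂μ) * K y ∂μ := by
  calc ∫ x, v x * levyOperator μ K u x ∂μ
      = ∫ x, ∫ y, v x * (secondDifference u x y * K y) ∂μ ∂μ := by
        simp only [integral_const_mul, levyOperator]
    _ = ∫ y, ∫ x, v x * (secondDifference u x y * K y) ∂μ ∂μ :=
        integral_integral_swap (hK.integrable_prod_mul_secondDifference_mul hu_cont hu hv)
    _ = ∫ y, (∫ x, v x * secondDifference u x y ∂μ) * K y ∂μ := by
        simp only [← mul_assoc, integral_mul_const]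

theorem integral_mul_levyOperator_comm [μ.IsAddRightInvariant] (hK : IsLevyKernel μ K)
    (hu_cont : Continuous u) (hu_int : Integrable u μ) (hu_bdd : ∀ x, ‖u x‖ ≤ A)
    (hu : ∀ x y, |secondDifference u x y| ≤ C * min 1 (‖y‖ ^ 2))
    (hv_cont : Continuous v) (hv_int : Integrable v μ)
    (hv : ∀ x y, |secondDifference v x y| ≤ D * min 1 (‖y‖ ^ 2)) :
    ∫ x, v x * levyOperator μ K u x ∂μ = ∫ x, u x * levyOperator μ K v x ∂μ := by
  have integrable_mul_translate : ∀ y, Integrable (fun x => v x * u (x + y)) μ := fun y =>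
    hv_int.mul_bdd (hu_cont.comp (continuous_add_const y)).aestronglyMeasurable
      (.of_forall fun x => hu_bdd (x + y))
  rw [hK.integral_mul_levyOperator hu_cont hu hv_int,
    hK.integral_mul_levyOperator hv_cont hv hu_int]
  simp only [integral_mul_secondDifference_comm integrable_mul_translate]

end IsLevyKernel

end LevyOperator

section FractionalKernel

theorem integrableOn_min_one_sq_mul_rpow {α : ℝ} (hα : α ∈ Ioo (0 : ℝ) 2) :
    IntegrableOn (fun r : ℝ => min 1 (r ^ 2) * r ^ (-1 - α)) (Ioi 0) := by
  rw [← Ioc_union_Ioi_eq_Ioi zero_le_one]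
  refine IntegrableOn.union ?_ ?_
  · have near_zero : IntegrableOn (fun r : ℝ => r ^ (1 - α)) (Ioc 0 1) :=
      (intervalIntegrable_iff_integrableOn_Ioc_of_le zero_le_one).1
        (intervalIntegral.intervalIntegrable_rpow' (by linarith [hα.2]))
    refine near_zero.congr_fun (fun r hr => ?_) measurableSet_Ioc
    dsimp only
    rw [min_eq_right (pow_le_one₀ hr.1.le hr.2), ← Real.rpow_natCast, ← Real.rpow_add hr.1]
    ring_nf
  · have near_infinity : IntegrableOn (fun r : ℝ => r ^ (-1 - α)) (Ioi 1) :=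
      integrableOn_Ioi_rpow_of_lt (by linarith [hα.1]) one_pos
    refine near_infinity.congr_fun (fun r hr => ?_) measurableSet_Ioi
    dsimp only
    rw [min_eq_left (one_le_pow₀ (le_of_lt hr)), one_mul]

variable {E : Type*} [NormedAddCommGroup E] [NormedSpace ℝ E] [FiniteDimensional ℝ E]
  [Nontrivial E] [MeasurableSpace E] [BorelSpace E]

theorem isLevyKernel_inv_norm_rpow (μ : Measure E) [μ.IsAddHaarMeasure] {α : ℝ}
    (hα : α ∈ Ioo (0 : ℝ) 2) :
    IsLevyKernel μ fun y => (‖y‖ ^ (Module.finrank ℝ E + α))⁻¹ where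
  aestronglyMeasurable := (measurable_norm.pow_const _).inv.aestronglyMeasurable
  integrable_min_mul := by
    refine (integrable_fun_norm_addHaar μ (f := fun r : ℝ =>
      min 1 (r ^ 2) * (r ^ (Module.finrank ℝ E + α))⁻¹)).2 ?_
    refine (integrableOn_min_one_sq_mul_rpow hα).congr_fun (fun r (hr : 0 < r) => ?_)
      measurableSet_Ioi
    have radial_power :
        r ^ (-1 - α) = r ^ (Module.finrank ℝ E - 1) * (r ^ (Module.finrank ℝ E + α))⁻¹ := by
      rw [← Real.rpow_natCast, ← Real.rpow_neg hr.le, ← Real.rpow_add hr,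
        Nat.cast_pred Module.finrank_pos]
      ring_nf
    simp only [radial_power, smul_eq_mul]
    ring

theorem isLevyKernel_fractional {n : ℕ} (hn : 1 ≤ n) {s : ℝ} (hs : s ∈ Ioo (0 : ℝ) 1) :
    IsLevyKernel (volume : Measure (EuclideanSpace ℝ (Fin n)))
      fun y => (‖y‖ ^ ((n : ℝ) + 2 * s))⁻¹ := by
  have : Nontrivial (EuclideanSpace ℝ (Fin n)) :=
    Module.nontrivial_of_finrank_pos (R := ℝ) (by rwa [finrank_euclideanSpace_fin])
  simpa only [finrank_euclideanSpace_fin] using isLevyKernel_inv_norm_rpow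
    (volume : Measure (EuclideanSpace ℝ (Fin n))) (α := 2 * s)
    ⟨by linarith [hs.1], by linarith [hs.2]⟩

end FractionalKernel

theorem fracLap_eq_levyOperator {n : ℕ} (hn : 1 ≤ n) (s : ℝ) (u : EuclideanSpace ℝ (Fin n) → ℝ) :
    fracLap n hn s u = fun x =>
      fracC n hn s / 2 * levyOperator volume (fun y => (‖y‖ ^ ((n : ℝ) + 2 * s))⁻¹) u x := by
  funext x
  simp only [fracLap, levyOperator, secondDifference, div_eq_mul_inv]

theorem fractionalLaplacian_symmetric_general
    (n : ℕ) (hn : 1 ≤ n) (s : ℝ) (hs : s ∈ Set.Ioo (0 : ℝ) 1)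
    {u v : EuclideanSpace ℝ (Fin n) → ℝ} {A B : ℝ} {L M : NNReal}
    (hu_int : Integrable u) (hu_bdd : ∀ x, ‖u x‖ ≤ A)
    (hu : Differentiable ℝ u) (hu' : LipschitzWith L (fderiv ℝ u))
    (hv_int : Integrable v) (hv_bdd : ∀ x, ‖v x‖ ≤ B)
    (hv : Differentiable ℝ v) (hv' : LipschitzWith M (fderiv ℝ v)) :
    (∀ x, Integrable fun y => (2 * u x - u (x + y) - u (x - y)) / ‖y‖ ^ ((n : ℝ) + 2 * s)) ∧
    (∀ x, Integrable fun y => (2 * v x - v (x + y) - v (x - y)) / ‖y‖ ^ ((n : ℝ) + 2 * s)) ∧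
    Integrable (fun x => fracLap n hn s u x * v x) ∧
    Integrable (fun x => u x * fracLap n hn s v x) ∧
    ∫ x, fracLap n hn s u x * v x = ∫ x, u x * fracLap n hn s v x := by
  have hK := isLevyKernel_fractional hn hs
  obtain ⟨C, hC⟩ := exists_abs_secondDifference_le hu_bdd hu hu'
  obtain ⟨D, hD⟩ := exists_abs_secondDifference_le hv_bdd hv hv'
  simp only [fracLap_eq_levyOperator, mul_comm (levyOperator _ _ _ _), mul_assoc,
    mul_left_comm _ (fracC n hn s / 2), integral_const_mul]
  exact ⟨hK.integrable_secondDifference_mul hu.continuous hC,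
    hK.integrable_secondDifference_mul hv.continuous hD,
    (hK.integrable_mul_levyOperator hu.continuous hC hv_int).const_mul _,
    (hK.integrable_mul_levyOperator hv.continuous hD hu_int).const_mul _,
    congrArg _ (hK.integral_mul_levyOperator_comm hu.continuous hu_int hu_bdd hC
      hv.continuous hv_int hD)⟩

theorem exists_lipschitzWith_schwartzMap {E F : Type*} [NormedAddCommGroup E] [NormedSpace ℝ E]
    [NormedAddCommGroup F] [NormedSpace ℝ F] (f : SchwartzMap E F) : ∃ L, LipschitzWith L f :=
  ⟨⟨SchwartzMap.seminorm ℝ 0 0 (SchwartzMap.fderivCLM ℝ E F f), apply_nonneg _ _⟩,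
    lipschitzWith_of_nnnorm_fderiv_le f.differentiable
      (SchwartzMap.norm_le_seminorm ℝ (SchwartzMap.fderivCLM ℝ E F f))⟩

/-- Integration by parts formula (symmetry) for the fractional
Laplacian on Schwartz functions: all the integrals involved converge absolutely
and `∫ ((−Δ)^s u) v = ∫ u ((−Δ)^s v)`. -/
theorem fractionalLaplacian_symmetric
    (n : ℕ) (hn : 1 ≤ n) (s : ℝ) (hs : s ∈ Set.Ioo (0:ℝ) 1)
    (u v : SchwartzMap (EuclideanSpace ℝ (Fin n)) ℝ) :
    (∀ x : EuclideanSpace ℝ (Fin n),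
      MeasureTheory.Integrable (fun y : EuclideanSpace ℝ (Fin n) =>
        (2 * u x - u (x + y) - u (x - y)) / ‖y‖ ^ ((n : ℝ) + 2 * s))) ∧
    (∀ x : EuclideanSpace ℝ (Fin n),
      MeasureTheory.Integrable (fun y : EuclideanSpace ℝ (Fin n) =>
        (2 * v x - v (x + y) - v (x - y)) / ‖y‖ ^ ((n : ℝ) + 2 * s))) ∧
    MeasureTheory.Integrable (fun x : EuclideanSpace ℝ (Fin n) =>
      fracLap n hn s (⇑u) x * v x) ∧
    MeasureTheory.Integrable (fun x : EuclideanSpace ℝ (Fin n) =>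
      u x * fracLap n hn s (⇑v) x) ∧
    (∫ x : EuclideanSpace ℝ (Fin n), fracLap n hn s (⇑u) x * v x)
      = ∫ x : EuclideanSpace ℝ (Fin n), u x * fracLap n hn s (⇑v) x := by
  obtain ⟨L, hL⟩ := exists_lipschitzWith_schwartzMap (SchwartzMap.fderivCLM ℝ _ ℝ u)
  obtain ⟨M, hM⟩ := exists_lipschitzWith_schwartzMap (SchwartzMap.fderivCLM ℝ _ ℝ v)
  exact fractionalLaplacian_symmetric_general n hn s hs u.integrable
    (SchwartzMap.norm_le_seminorm ℝ u) u.differentiable hL v.integrable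
    (SchwartzMap.norm_le_seminorm ℝ v) v.differentiable hM
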